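/- Assume N ≥ 2. Let I ∈ S_1 and let λ be any weight. Then e_1 (f_I H_I + f_{I⁻} H_{I⁻}) v_λ = 0 in M(λ). -/

import Mathlib

noncomputable section

open FreeAlgebra

/-- `𝕜 = F(q)`, the field of rational functions over `F`. -/
abbrev kk (F : Type) [Field F] : Type := RatFunc F

/-- The variable `q`. -/
def qq (F : Type) [Field F] : kk F := RatFunc.X

/-- `v = q²`. -/
def vv (F : Type) [Field F] : kk F := qq F ^ 2

/-- The balanced quantum integer `[n]_v`. -/
def qint (F : Type) [Field F] (n : ℤ) : kk F :=
  (vv F ^ n - vv F ^ (-n)) / (vv F - (vv F)⁻¹)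

/-- The quantum factorial `[m]_v!`. -/
def qfact (F : Type) [Field F] (m : ℕ) : kk F :=
  ∏ j ∈ Finset.Icc 1 m, qint F j

/-- The balanced Gaussian binomial coefficient `C(n,i)_v`. -/
def qbinom (F : Type) [Field F] (n i : ℕ) : kk F :=
  qfact F n / (qfact F i * qfact F (n - i))

/-- The Cartan matrix of `sl(N+1)`, with 1-based indices. -/
def cartan (i j : ℕ) : ℤ :=
  if i = j then 2 else if i + 1 = j ∨ j + 1 = i then -1 else 0

/-- Generators of `U_q(sl(N+1))`: `e i`, `f i`, `k i`, `kinv i` (0-based `i : Fin N`,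
corresponding to the 1-based index `i+1`). -/
inductive Gen (N : ℕ) : Type
  | e : Fin N → Gen N
  | f : Fin N → Gen N
  | k : Fin N → Gen N
  | kinv : Fin N → Gen N

/-- The defining relations of `U_q(sl(N+1))`. -/
inductive UqRel (F : Type) [Field F] (N : ℕ) :
    FreeAlgebra (kk F) (Gen N) → FreeAlgebra (kk F) (Gen N) → Prop
  | kkinv (i : Fin N) : UqRel F N (ι (kk F) (Gen.k i) * ι (kk F) (Gen.kinv i)) 1
  | kinvk (i : Fin N) : UqRel F N (ι (kk F) (Gen.kinv i) * ι (kk F) (Gen.k i)) 1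
  | kcomm (i j : Fin N) :
      UqRel F N (ι (kk F) (Gen.k i) * ι (kk F) (Gen.k j))
        (ι (kk F) (Gen.k j) * ι (kk F) (Gen.k i))
  | ke (i j : Fin N) :
      UqRel F N (ι (kk F) (Gen.k i) * ι (kk F) (Gen.e j) * ι (kk F) (Gen.kinv i))
        ((qq F ^ cartan ((i : ℕ) + 1) ((j : ℕ) + 1)) • ι (kk F) (Gen.e j))
  | kf (i j : Fin N) :
      UqRel F N (ι (kk F) (Gen.k i) * ι (kk F) (Gen.f j) * ι (kk F) (Gen.kinv i))
        ((qq F ^ (-cartan ((i : ℕ) + 1) ((j : ℕ) + 1))) • ι (kk F) (Gen.f j))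
  | ef (i j : Fin N) :
      UqRel F N (ι (kk F) (Gen.e i) * ι (kk F) (Gen.f j) - ι (kk F) (Gen.f j) * ι (kk F) (Gen.e i))
        (if i = j then
          ((qq F ^ 2 - qq F ^ (-2 : ℤ))⁻¹) •
            ((ι (kk F) (Gen.k i)) ^ 2 - (ι (kk F) (Gen.kinv i)) ^ 2)
        else 0)
  | serre_e_near (i j : Fin N) (h : (i : ℕ) + 1 = j ∨ (j : ℕ) + 1 = i) :
      UqRel F N
        ((ι (kk F) (Gen.e i)) ^ 2 * ι (kk F) (Gen.e j)
          - (qq F ^ 2 + qq F ^ (-2 : ℤ)) •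
              (ι (kk F) (Gen.e i) * ι (kk F) (Gen.e j) * ι (kk F) (Gen.e i))
          + ι (kk F) (Gen.e j) * (ι (kk F) (Gen.e i)) ^ 2) 0
  | serre_f_near (i j : Fin N) (h : (i : ℕ) + 1 = j ∨ (j : ℕ) + 1 = i) :
      UqRel F N
        ((ι (kk F) (Gen.f i)) ^ 2 * ι (kk F) (Gen.f j)
          - (qq F ^ 2 + qq F ^ (-2 : ℤ)) •
              (ι (kk F) (Gen.f i) * ι (kk F) (Gen.f j) * ι (kk F) (Gen.f i))
          + ι (kk F) (Gen.f j) * (ι (kk F) (Gen.f i)) ^ 2) 0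
  | serre_e_far (i j : Fin N) (h : (i : ℕ) + 1 < j ∨ (j : ℕ) + 1 < i) :
      UqRel F N (ι (kk F) (Gen.e i) * ι (kk F) (Gen.e j))
        (ι (kk F) (Gen.e j) * ι (kk F) (Gen.e i))
  | serre_f_far (i j : Fin N) (h : (i : ℕ) + 1 < j ∨ (j : ℕ) + 1 < i) :
      UqRel F N (ι (kk F) (Gen.f i) * ι (kk F) (Gen.f j))
        (ι (kk F) (Gen.f j) * ι (kk F) (Gen.f i))

/-- The quantized enveloping algebra `U = U_q(sl(N+1))`. -/
abbrev Uq (F : Type) [Field F] (N : ℕ) : Type := RingQuot (UqRel F N)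

variable (F : Type) [Field F] (N : ℕ)

/-- The image of a generator in `U`. -/
def gen (g : Gen N) : Uq F N := RingQuot.mkAlgHom (kk F) (UqRel F N) (ι (kk F) g)

/-- `e_i` (1-based index `1 ≤ i ≤ N`; junk value `0` outside this range). -/
def egen (i : ℕ) : Uq F N :=
  if h : 1 ≤ i ∧ i ≤ N then gen F N (Gen.e ⟨i - 1, by omega⟩) else 0

/-- `f_i` (1-based index). -/
def fgen (i : ℕ) : Uq F N :=
  if h : 1 ≤ i ∧ i ≤ N then gen F N (Gen.f ⟨i - 1, by omega⟩) else 0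

/-- `k_i` (1-based index). -/
def kgen (i : ℕ) : Uq F N :=
  if h : 1 ≤ i ∧ i ≤ N then gen F N (Gen.k ⟨i - 1, by omega⟩) else 0

/-- `k_i⁻¹` (1-based index). -/
def kinvgen (i : ℕ) : Uq F N :=
  if h : 1 ≤ i ∧ i ≤ N then gen F N (Gen.kinv ⟨i - 1, by omega⟩) else 0

/-- Auxiliary recursion: `fword i d = f_{i, i+1+d}`. -/
def fword (i : ℕ) : ℕ → Uq F N
  | 0 => fgen F N i
  | d + 1 =>
      qq F • (fword i d * fgen F N (i + 1 + d)) -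
        (qq F)⁻¹ • (fgen F N (i + 1 + d) * fword i d)

/-- The quantum root vector `f_{i,j}` (for `1 ≤ i < j ≤ N+1`). -/
def fij (i j : ℕ) : Uq F N := fword F N i (j - i - 1)

/-- Product of `f_{a,b}` over successive entries of a list. -/
def fList : List ℕ → Uq F N
  | a :: b :: rest => fij F N a b * fList (b :: rest)
  | _ => 1

/-- `f_S` for a finite set `S` of indices. -/
def fSet (S : Finset ℕ) : Uq F N := fList F N (S.sort (· ≤ ·))

/-- The index set `𝕀` of subsets of `{1,…,N+1}` containing `1` and `N+1`. -/
def II : Finset (Finset ℕ) :=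
  (Finset.Icc 1 (N + 1)).powerset.filter fun I => 1 ∈ I ∧ N + 1 ∈ I

/-- `r(I) = {s - 1 : s ∈ {1,…,N+1} \ I}`. -/
def rSet (I : Finset ℕ) : Finset ℕ := (Finset.Icc 1 (N + 1) \ I).image (· - 1)

/-- `k_{σ_i} = k_1 ⋯ k_i`. -/
def kσ (i : ℕ) : Uq F N := ((List.range i).map fun j => kgen F N (j + 1)).prod

/-- `K_{σ_i} = k_{σ_i}²`. -/
def Kσ (i : ℕ) : Uq F N := kσ F N i ^ 2

/-- `k_{σ_i}⁻¹ = k_1⁻¹ ⋯ k_i⁻¹`. -/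
def kσinv (i : ℕ) : Uq F N := ((List.range i).map fun j => kinvgen F N (j + 1)).prod

/-- `K_{σ_i}⁻¹`. -/
def KσInv (i : ℕ) : Uq F N := kσinv F N i ^ 2

/-- The element `h_i = -q⁻¹ v^{-(i-1)} K_{σ_i}⁻¹ (K_{σ_i} v^i - K_{σ_i}⁻¹ v^{-i})/(v - v⁻¹) ∈ U`. -/
def hElt (i : ℕ) : Uq F N :=
  (-(qq F)⁻¹ * vv F ^ (1 - (i : ℤ)) * (vv F - (vv F)⁻¹)⁻¹) •
    (KσInv F N i * (vv F ^ (i : ℤ) • Kσ F N i - vv F ^ (-(i : ℤ)) • KσInv F N i))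

/-- `H_I = ∏_{i ∈ r(I)} h_i` (product taken in increasing order of indices). -/
def HI (I : Finset ℕ) : Uq F N := (((rSet N I).sort (· ≤ ·)).map (hElt F N)).prod

/-- A weight `λ` is recorded by its values `(λ, α_j)` for `1 ≤ j ≤ N`;
`pairσ lam i = (λ, σ_i) = (λ, α_1 + ⋯ + α_i)`. -/
def pairσ (lam : ℕ → ℤ) (i : ℕ) : ℤ := ∑ j ∈ Finset.Icc 1 i, lam j

/-- The scalar `h_i(λ) = -q⁻¹ v^{-((λ,σ_i)+i-1)} [(λ,σ_i)+i]_v`. -/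
def hval (lam : ℕ → ℤ) (i : ℕ) : kk F :=
  -(qq F)⁻¹ * vv F ^ (-(pairσ lam i + (i : ℤ) - 1)) * qint F (pairσ lam i + (i : ℤ))

/-- The scalar `H_I(λ) = ∏_{i ∈ r(I)} h_i(λ)`. -/
def HIval (lam : ℕ → ℤ) (I : Finset ℕ) : kk F := ∏ i ∈ rSet N I, hval F lam i

/-- The left ideal `J_λ` of `U` generated by `e_1, …, e_N` and the `k_j - q^{(λ,α_j)}`. -/
def vermaIdeal (lam : ℕ → ℤ) : Submodule (Uq F N) (Uq F N) :=
  Submodule.span (Uq F N)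
    ({x | ∃ j, 1 ≤ j ∧ j ≤ N ∧ x = egen F N j} ∪
      {x | ∃ j, 1 ≤ j ∧ j ≤ N ∧
        x = kgen F N j - algebraMap (kk F) (Uq F N) (qq F ^ lam j)})

/-- The Verma module `M(λ) = U/J_λ`. -/
abbrev Verma (lam : ℕ → ℤ) : Type := Uq F N ⧸ vermaIdeal F N lam

/-- The highest weight vector `v_λ`, the image of `1` in `M(λ)`. -/
def hw (lam : ℕ → ℤ) : Verma F N lam := Submodule.Quotient.mk 1

/-- The candidate Shapovalov element `Θ_η = Σ_{I ∈ 𝕀} f_I H_I`. -/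
def Theta : Uq F N := ∑ I ∈ II N, fSet F N I * HI F N I

/-- `D^n(λ)`: the `(n-1) × (n-1)` matrix over `U` with `(i,j)` entry (1-based)
`f_{i,j+1}` if `i ≤ j`, `-h_j(λ)·1` if `i = j+1`, and `0` otherwise. -/
def Dmat (lam : ℕ → ℤ) (n : ℕ) : Matrix (Fin (n - 1)) (Fin (n - 1)) (Uq F N) :=
  Matrix.of fun i j =>
    if (i : ℕ) ≤ (j : ℕ) then fij F N ((i : ℕ) + 1) ((j : ℕ) + 2)
    else if (i : ℕ) = (j : ℕ) + 1 then
      -(algebraMap (kk F) (Uq F N) (hval F lam ((j : ℕ) + 1)))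
    else 0

/-- The left-to-right determinant of a matrix with noncommutative entries. -/
def ldet {m : ℕ} (B : Matrix (Fin m) (Fin m) (Uq F N)) : Uq F N :=
  ∑ w : Equiv.Perm (Fin m),
    ((Equiv.Perm.sign w : ℤˣ) : ℤ) • ((List.finRange m).map fun j => B (w j) j).prod

end

/-! The root vectors satisfy `[e_1, f_{1,j}] = q f_{2,j} k_1²` for `j > 2`. Write `I = {1, 2} ∪ S`,
let `s` be the least element of `S` and put `z = f_{2,s} f_S v_λ`, so that `f_I v_λ = f_1 z` and
`f_{I⁻} v_λ = f_{1,s} f_S v_λ`. As `e_1` commutes with `f_{2,s} f_S` and `z` has `k_1`-weight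
`q^{λ_1 + 1}`, where `λ_1 = (λ, α_1)`, we get `e_1 f_I v_λ = [λ_1 + 1]_v z` and
`e_1 f_{I⁻} v_λ = q v^{λ_1} z`. Since `H_{I⁻}(λ) = h_1(λ) H_I(λ)` and
`h_1(λ) q v^{λ_1} = -[λ_1 + 1]_v`, the two contributions cancel.
-/

section Scalars

theorem qq_ne_zero (F : Type) [Field F] : qq F ≠ 0 := RatFunc.X_ne_zero

theorem vv_ne_zero (F : Type) [Field F] : vv F ≠ 0 := pow_ne_zero 2 (qq_ne_zero F)

theorem qq_zpow_sq (F : Type) [Field F] (a : ℤ) : (qq F ^ a) ^ 2 = vv F ^ a := by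
  rw [vv, ← zpow_natCast, ← zpow_natCast, zpow_comm]

theorem vv_sub_inv_ne_zero (F : Type) [Field F] : vv F - (vv F)⁻¹ ≠ 0 := by
  intro h
  have hdeg : (vv F).intDegree = 2 := by
    rw [vv, pow_two, RatFunc.intDegree_mul (qq_ne_zero F) (qq_ne_zero F), qq,
      RatFunc.intDegree_X]
    norm_num
  have hinv := congrArg RatFunc.intDegree (sub_eq_zero.mp h)
  rw [RatFunc.intDegree_inv, hdeg] at hinv
  norm_num at hinv

theorem hval_mul_qq_mul_vv_zpow (F : Type) [Field F] (lam : ℕ → ℤ) (i : ℕ) :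
    hval F lam i * (qq F * vv F ^ (pairσ lam i + i - 1)) = -qint F (pairσ lam i + i) := by
  have hv : vv F ^ (-(pairσ lam i + (i : ℤ) - 1)) * vv F ^ (pairσ lam i + (i : ℤ) - 1) = 1 := by
    rw [← zpow_add₀ (vv_ne_zero F), neg_add_cancel, zpow_zero]
  calc hval F lam i * (qq F * vv F ^ (pairσ lam i + i - 1))
      = -((qq F)⁻¹ * qq F) *
          (vv F ^ (-(pairσ lam i + (i : ℤ) - 1)) * vv F ^ (pairσ lam i + (i : ℤ) - 1)) *
          qint F (pairσ lam i + i) := by rw [hval]; ring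
    _ = -qint F (pairσ lam i + i) := by
      rw [inv_mul_cancel₀ (qq_ne_zero F), hv]; ring

end Scalars

section Eigenvectors

variable {K A M : Type*} [CommSemiring K] [Semiring A] [Algebra K A]

theorem semiconjBy_pow_smul {c : K} {k x : A} (h : SemiconjBy k x (c • x)) (n : ℕ) :
    SemiconjBy (k ^ n) x (c ^ n • x) := by
  induction n with
  | zero => simp
  | succ n ih =>
    rw [pow_succ, pow_succ', mul_smul]
    exact (ih.smul_right c).mul_left h

variable [AddCommMonoid M] [Module K M] [Module A M] [IsScalarTower K A M]

theorem smul_smul_of_semiconjBy {k x : A} {c b : K} {w : M}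
    (hx : SemiconjBy k x (c • x)) (hw : k • w = b • w) : k • x • w = (c * b) • x • w := by
  rw [← mul_smul, hx.eq, smul_mul_assoc, smul_assoc, mul_smul, hw, smul_comm x, smul_smul]

theorem pow_smul_eq_of_smul_eq {k : A} {c : K} {w : M} (h : k • w = c • w) (n : ℕ) :
    k ^ n • w = c ^ n • w := by
  induction n with
  | zero => simp
  | succ n ih => rw [pow_succ, mul_smul, h, smul_comm, ih, smul_smul, pow_succ']

theorem list_prod_smul_eq {ι : Type*} {x : ι → A} {c : ι → K} {w : M} {l : List ι}
    (h : ∀ i ∈ l, x i • w = c i • w) : (l.map x).prod • w = (l.map c).prod • w := by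
  induction l with
  | nil => simp
  | cons i l ih =>
    rw [List.map_cons, List.prod_cons, mul_smul, ih fun j hj ↦ h j (List.mem_cons_of_mem i hj),
      smul_comm, h i List.mem_cons_self, smul_smul, List.map_cons, List.prod_cons, mul_comm]

end Eigenvectors

theorem smul_eq_inv_smul_of_mul_eq_one {K A M : Type*} [Semifield K] [Semiring A] [Algebra K A]
    [AddCommMonoid M] [Module K M] [Module A M] [IsScalarTower K A M] {k k' : A} {c : K} {w : M}
    (hc : c ≠ 0) (hk : k' * k = 1) (h : k • w = c • w) : k' • w = c⁻¹ • w := by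
  rw [eq_inv_smul_iff₀ hc, smul_comm, ← h, ← mul_smul, hk, one_smul]

section QBracket

variable {K A : Type*} [Field K] [Ring A] [Algebra K A]

/-- The `q`-commutator `q xy - q⁻¹ yx`, by which the root vectors `f_{i,j}` are built. -/
def qBracket (q : K) (x y : A) : A := q • (x * y) - q⁻¹ • (y * x)

variable (q : K)

theorem semiconjBy_qBracket {a x x' y y' : A} (hx : SemiconjBy a x x') (hy : SemiconjBy a y y') :
    SemiconjBy a (qBracket q x y) (qBracket q x' y') :=
  ((hx.mul_right hy).smul_right q).sub_right ((hy.mul_right hx).smul_right q⁻¹)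

theorem commute_qBracket {a x y : A} (hx : Commute a x) (hy : Commute a y) :
    Commute a (qBracket q x y) :=
  semiconjBy_qBracket q hx hy

theorem qBracket_smul_left (c : K) (x y : A) : qBracket q (c • x) y = c • qBracket q x y := by
  simp only [qBracket, smul_mul_assoc, mul_smul_comm, smul_sub, smul_comm c]

theorem qBracket_mul_of_commute {k y : A} (h : Commute k y) (x : A) :
    qBracket q (x * k) y = qBracket q x y * k := by
  simp only [qBracket, sub_mul, smul_mul_assoc, mul_assoc, h.eq]

theorem lie_qBracket_of_commute {a y : A} (h : Commute a y) (x : A) :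
    ⁅a, qBracket q x y⁆ = qBracket q ⁅a, x⁆ y := by
  simp only [qBracket, Ring.lie_def, mul_sub, sub_mul, mul_smul_comm, smul_mul_assoc, mul_assoc,
    smul_sub, h.eq, h.left_comm]
  abel

theorem qBracket_sq_sub_sq {q : K} (hq : q ≠ 0) {k k' y : A} (hk : SemiconjBy k y (q • y))
    (hk' : SemiconjBy k' y (q⁻¹ • y)) :
    qBracket q (k ^ 2 - k' ^ 2) y = (q ^ 2 - (q ^ 2)⁻¹) • q • (y * k ^ 2) := by
  have hk2 : k ^ 2 * y = q ^ 2 • (y * k ^ 2) := by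
    rw [(semiconjBy_pow_smul hk 2).eq, smul_mul_assoc]
  have hk2' : k' ^ 2 * y = (q ^ 2)⁻¹ • (y * k' ^ 2) := by
    rw [(semiconjBy_pow_smul hk' 2).eq, smul_mul_assoc, inv_pow]
  rw [qBracket, sub_mul, mul_sub, hk2, hk2']
  match_scalars <;> field_simp
  ring

end QBracket

section Generators

variable (F : Type) [Field F] (N : ℕ)

theorem mkAlgHom_eq_of_uqRel {a b : FreeAlgebra (kk F) (Gen N)}
    (h : UqRel F N a b) :
    RingQuot.mkAlgHom (kk F) (UqRel F N) a = RingQuot.mkAlgHom (kk F) (UqRel F N) b :=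
  RingQuot.mkAlgHom_rel (kk F) h

theorem kgen_mul_kinvgen {i : ℕ} (h : 1 ≤ i ∧ i ≤ N) : kgen F N i * kinvgen F N i = 1 := by
  simpa [kgen, kinvgen, h, gen] using mkAlgHom_eq_of_uqRel F N (.kkinv ⟨i - 1, by omega⟩)

theorem kinvgen_mul_kgen {i : ℕ} (h : 1 ≤ i ∧ i ≤ N) : kinvgen F N i * kgen F N i = 1 := by
  simpa [kgen, kinvgen, h, gen] using mkAlgHom_eq_of_uqRel F N (.kinvk ⟨i - 1, by omega⟩)

theorem lie_egen_fgen_self (i : ℕ) :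
    ⁅egen F N i, fgen F N i⁆ =
      (vv F - (vv F)⁻¹)⁻¹ • (kgen F N i ^ 2 - kinvgen F N i ^ 2) := by
  by_cases h : 1 ≤ i ∧ i ≤ N
  · have hv : qq F ^ (-2 : ℤ) = (vv F)⁻¹ := zpow_neg_coe_of_pos _ two_pos
    have hef := mkAlgHom_eq_of_uqRel F N (.ef ⟨i - 1, by omega⟩ ⟨i - 1, by omega⟩)
    rw [if_pos rfl, hv, ← vv] at hef
    simpa only [egen, fgen, kgen, kinvgen, h, gen, and_self, dite_true, Ring.lie_def, map_sub,
      map_mul, map_smul, map_pow] using hef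
  · simp [egen, fgen, kgen, kinvgen, h, Ring.lie_def]

theorem commute_egen_fgen {i j : ℕ} (hij : i ≠ j) : Commute (egen F N i) (fgen F N j) := by
  unfold egen fgen
  split_ifs with hi hj
  · have hef := mkAlgHom_eq_of_uqRel F N (.ef ⟨i - 1, by omega⟩ ⟨j - 1, by omega⟩)
    rw [if_neg (by simp only [Fin.mk.injEq]; omega), map_sub, map_mul, map_mul, map_zero,
      sub_eq_zero] at hef
    exact hef
  all_goals simp

theorem semiconjBy_kgen_fgen (i j : ℕ) :
    SemiconjBy (kgen F N i) (fgen F N j) (qq F ^ (-cartan i j) • fgen F N j) := by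
  by_cases hi : 1 ≤ i ∧ i ≤ N
  · by_cases hj : 1 ≤ j ∧ j ≤ N
    · have hconj : kgen F N i * fgen F N j * kinvgen F N i =
          qq F ^ (-cartan i j) • fgen F N j := by
        simpa [kgen, kinvgen, fgen, gen, hi, hj] using
          mkAlgHom_eq_of_uqRel F N (.kf ⟨i - 1, by omega⟩ ⟨j - 1, by omega⟩)
      rw [SemiconjBy, ← hconj, mul_assoc _ (kinvgen F N i), kinvgen_mul_kgen F N hi, mul_one]
    · simp [fgen, hj]
  · simp [SemiconjBy, kgen, hi]

theorem commute_kgen_fgen {i j : ℕ} (hij : i + 1 < j) :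
    Commute (kgen F N i) (fgen F N j) := by
  have hc : cartan i j = 0 := by
    rw [cartan, if_neg (by omega), if_neg (by omega)]
  simpa [hc, Commute] using semiconjBy_kgen_fgen F N i j

theorem semiconjBy_kgen_fgen_succ (i : ℕ) :
    SemiconjBy (kgen F N i) (fgen F N (i + 1)) (qq F • fgen F N (i + 1)) := by
  simpa [cartan] using semiconjBy_kgen_fgen F N i (i + 1)

theorem semiconjBy_kinvgen_fgen_succ (i : ℕ) :
    SemiconjBy (kinvgen F N i) (fgen F N (i + 1)) ((qq F)⁻¹ • fgen F N (i + 1)) := by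
  by_cases hi : 1 ≤ i ∧ i ≤ N
  · let k : (Uq F N)ˣ :=
      ⟨kgen F N i, kinvgen F N i, kgen_mul_kinvgen F N hi, kinvgen_mul_kgen F N hi⟩
    have hk : SemiconjBy (k : Uq F N) (fgen F N (i + 1)) (qq F • fgen F N (i + 1)) :=
      semiconjBy_kgen_fgen_succ F N i
    have hinv := hk.units_inv_symm_left.smul_right (qq F)⁻¹
    rwa [smul_smul, inv_mul_cancel₀ (qq_ne_zero F), one_smul] at hinv
  · simp [SemiconjBy, kinvgen, hi]

end Generators

section RootVectors

variable (F : Type) [Field F] (N : ℕ)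

theorem fij_self_succ (i : ℕ) : fij F N i (i + 1) = fgen F N i := by
  simp [fij, fword]

theorem fij_succ {i j : ℕ} (hij : i < j) :
    fij F N i (j + 1) = qBracket (qq F) (fij F N i j) (fgen F N j) := by
  obtain ⟨d, rfl⟩ := Nat.exists_eq_add_of_lt hij
  have hd : i + d + 1 - i - 1 = d := by omega
  have hd' : i + d + 1 + 1 - i - 1 = d + 1 := by omega
  rw [fij, fij, hd, hd', fword, qBracket, Nat.add_right_comm i d 1]

variable {F N}

theorem commute_fij {x : Uq F N} {i j : ℕ} (hij : i < j)
    (hx : ∀ m, i ≤ m → Commute x (fgen F N m)) : Commute x (fij F N i j) := by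
  induction j, hij using Nat.le_induction with
  | base => rw [fij_self_succ]; exact hx i le_rfl
  | succ j hij ih =>
    rw [fij_succ F N hij]
    exact commute_qBracket _ ih (hx j (Nat.le_of_lt hij))

theorem commute_fList {x : Uq F N} {m : ℕ} (hx : ∀ j, m ≤ j → Commute x (fgen F N j)) :
    ∀ {l : List ℕ}, l.Pairwise (· < ·) → (∀ s ∈ l, m ≤ s) → Commute x (fList F N l)
  | [], _, _ => Commute.one_right x
  | [_], _, _ => Commute.one_right x
  | a :: b :: l, hl, hm => by
    rw [fList]
    have hab : a < b := List.rel_of_pairwise_cons hl (List.mem_cons_self)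
    have hma : m ≤ a := hm a List.mem_cons_self
    exact (commute_fij hab fun j hj ↦ hx j (hma.trans hj)).mul_right
      (commute_fList hx hl.of_cons fun s hs ↦ hm s (List.mem_cons_of_mem a hs))

theorem commute_fSet {x : Uq F N} {m : ℕ} (hx : ∀ j, m ≤ j → Commute x (fgen F N j))
    {S : Finset ℕ} (hS : ∀ s ∈ S, m ≤ s) : Commute x (fSet F N S) :=
  commute_fList hx S.sortedLT_sort.pairwise fun s hs ↦ hS s ((Finset.mem_sort _).mp hs)

variable (F N)

theorem fSet_insert {S : Finset ℕ} {a b : ℕ} (hb : IsLeast (S : Set ℕ) b) (hab : a < b) :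
    fSet F N (insert a S) = fij F N a b * fSet F N S := by
  have ha : ∀ s ∈ S, a < s := fun s hs ↦ hab.trans_le (hb.2 hs)
  have hsort : S.sort (· ≤ ·) = b :: (S.erase b).sort (· ≤ ·) := by
    rw [← Finset.sort_insert (· ≤ ·) (fun s hs ↦ hb.2 (Finset.mem_of_mem_erase hs))
      (Finset.notMem_erase b S), Finset.insert_erase hb.1]
  rw [fSet, fSet, Finset.sort_insert (· ≤ ·) (fun s hs ↦ (ha s hs).le)
    (fun h ↦ (ha a h).false), hsort, fList]

theorem semiconjBy_kgen_fij {i j : ℕ} (hij : i + 1 < j) :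
    SemiconjBy (kgen F N i) (fij F N (i + 1) j) (qq F • fij F N (i + 1) j) := by
  induction j, hij using Nat.le_induction with
  | base => simpa only [fij_self_succ] using semiconjBy_kgen_fgen_succ F N i
  | succ j hij ih =>
    rw [fij_succ F N hij, ← qBracket_smul_left]
    exact semiconjBy_qBracket _ ih (commute_kgen_fgen F N hij)

theorem lie_egen_fij_add_two (i : ℕ) :
    ⁅egen F N i, fij F N i (i + 2)⁆ = qq F • (fgen F N (i + 1) * kgen F N i ^ 2) := by
  rw [fij_succ F N (Nat.lt_add_one i), fij_self_succ,
    lie_qBracket_of_commute _ (commute_egen_fgen F N (Nat.lt_add_one i).ne),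
    lie_egen_fgen_self, qBracket_smul_left, inv_smul_eq_iff₀ (vv_sub_inv_ne_zero F), vv]
  exact qBracket_sq_sub_sq (qq_ne_zero F) (semiconjBy_kgen_fgen_succ F N i)
    (semiconjBy_kinvgen_fgen_succ F N i)

theorem lie_egen_fij {i j : ℕ} (hij : i + 1 < j) :
    ⁅egen F N i, fij F N i j⁆ = qq F • (fij F N (i + 1) j * kgen F N i ^ 2) := by
  induction j, hij using Nat.le_induction with
  | base => rw [fij_self_succ, lie_egen_fij_add_two]
  | succ j hij ih =>
    have hi : i < j := Nat.lt_of_succ_lt hij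
    rw [fij_succ F N hi, fij_succ F N hij,
      lie_qBracket_of_commute _ (commute_egen_fgen F N hi.ne), ih, qBracket_smul_left,
      qBracket_mul_of_commute _ ((commute_kgen_fgen F N hij).pow_left 2)]

end RootVectors

section Weights

variable {F : Type} [Field F] {N : ℕ} {M : Type*} [AddCommGroup M] [Module (kk F) M]
  [Module (Uq F N) M] [IsScalarTower (kk F) (Uq F N) M]

theorem egen_smul_fgen_smul {i : ℕ} (hi : 1 ≤ i ∧ i ≤ N) {a : ℤ} {w : M}
    (he : egen F N i • w = 0) (hk : kgen F N i • w = qq F ^ a • w) :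
    egen F N i • fgen F N i • w = qint F a • w := by
  have hkinv : kinvgen F N i • w = (qq F ^ a)⁻¹ • w :=
    smul_eq_inv_smul_of_mul_eq_one (zpow_ne_zero a (qq_ne_zero F)) (kinvgen_mul_kgen F N hi) hk
  have hef : egen F N i * fgen F N i =
      (vv F - (vv F)⁻¹)⁻¹ • (kgen F N i ^ 2 - kinvgen F N i ^ 2) + fgen F N i * egen F N i :=
    sub_eq_iff_eq_add.mp (lie_egen_fgen_self F N i)
  rw [← mul_smul, hef, add_smul, mul_smul (fgen F N i), he, smul_zero, add_zero, smul_assoc,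
    sub_smul, pow_smul_eq_of_smul_eq hk, pow_smul_eq_of_smul_eq hkinv, inv_pow, qq_zpow_sq,
    ← zpow_neg, ← sub_smul, smul_smul, qint, div_eq_inv_mul]

theorem egen_smul_fgen_smul_fij_smul {i j : ℕ} (hi : 1 ≤ i ∧ i ≤ N) (hij : i + 1 < j) {a : ℤ}
    {w : M} (he : egen F N i • w = 0) (hk : kgen F N i • w = qq F ^ a • w) :
    egen F N i • fgen F N i • fij F N (i + 1) j • w =
      qint F (a + 1) • fij F N (i + 1) j • w := by
  apply egen_smul_fgen_smul hi
  · have hcomm : Commute (egen F N i) (fij F N (i + 1) j) :=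
      commute_fij hij fun m hm ↦ commute_egen_fgen F N (Nat.ne_of_lt hm)
    rw [← mul_smul, hcomm.eq, mul_smul, he, smul_zero]
  · rw [smul_smul_of_semiconjBy (semiconjBy_kgen_fij F N hij) hk, zpow_add_one₀ (qq_ne_zero F),
      mul_comm]

theorem egen_smul_fij_smul {i j : ℕ} (hij : i + 1 < j) {a : ℤ} {w : M}
    (he : egen F N i • w = 0) (hk : kgen F N i • w = qq F ^ a • w) :
    egen F N i • fij F N i j • w = (qq F * vv F ^ a) • fij F N (i + 1) j • w := by
  have hef : egen F N i * fij F N i j =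
      qq F • (fij F N (i + 1) j * kgen F N i ^ 2) + fij F N i j * egen F N i :=
    sub_eq_iff_eq_add.mp (lie_egen_fij F N hij)
  rw [← mul_smul, hef, add_smul, mul_smul (fij F N i j), he, smul_zero, add_zero, smul_assoc,
    mul_smul, pow_smul_eq_of_smul_eq hk, qq_zpow_sq, smul_comm (fij F N (i + 1) j), smul_smul]

theorem egen_smul_add_smul_fij_smul {i j : ℕ} (hi : 1 ≤ i ∧ i ≤ N) (hij : i + 1 < j) {a : ℤ}
    {w : M} (he : egen F N i • w = 0) (hk : kgen F N i • w = qq F ^ a • w) {c : kk F}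
    (hc : c * (qq F * vv F ^ a) = -qint F (a + 1)) :
    egen F N i • (fgen F N i • fij F N (i + 1) j • w + c • fij F N i j • w) = 0 := by
  rw [smul_add, smul_comm _ c, egen_smul_fgen_smul_fij_smul hi hij he hk,
    egen_smul_fij_smul hij he hk, smul_smul, ← add_smul, hc, add_neg_cancel, zero_smul]

end Weights

section HighestWeight

theorem prod_qq_zpow (F : Type) [Field F] (lam : ℕ → ℤ) (i : ℕ) :
    ((List.range i).map fun j ↦ qq F ^ lam (j + 1)).prod = qq F ^ pairσ lam i := by
  induction i with
  | zero => simp [pairσ]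
  | succ i ih =>
    rw [List.range_succ, List.map_append, List.prod_append, ih, List.map_singleton,
      List.prod_singleton, ← zpow_add₀ (qq_ne_zero F), pairσ, pairσ,
      Finset.sum_Icc_succ_top (Nat.le_add_left 1 i)]

/-- A highest weight vector of weight `λ` in a `U`-module: a vector killed by every `e_j` on which
`k_j` acts by `q^{(λ,α_j)}`. The zero vector is allowed. -/
structure IsHighestWeightVector (F : Type) [Field F] (N : ℕ) {M : Type*} [AddCommGroup M]
    [Module (kk F) M] [Module (Uq F N) M] (lam : ℕ → ℤ) (w : M) : Prop where
  egen_smul : ∀ {j : ℕ}, 1 ≤ j ∧ j ≤ N → egen F N j • w = 0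
  kgen_smul : ∀ {j : ℕ}, 1 ≤ j ∧ j ≤ N → kgen F N j • w = qq F ^ lam j • w

variable {F : Type} [Field F] {N : ℕ} {M : Type*} [AddCommGroup M] [Module (kk F) M]
  [Module (Uq F N) M]

namespace IsHighestWeightVector

variable {lam : ℕ → ℤ} {w : M} (hw : IsHighestWeightVector F N lam w)
include hw

theorem egen_smul_fSet_smul {i : ℕ} (hi : 1 ≤ i ∧ i ≤ N) {S : Finset ℕ} (hS : ∀ s ∈ S, i < s) :
    egen F N i • fSet F N S • w = 0 := by
  have hcomm : Commute (egen F N i) (fSet F N S) :=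
    commute_fSet (fun j hj ↦ commute_egen_fgen F N (Nat.ne_of_lt hj)) hS
  rw [← mul_smul, hcomm.eq, mul_smul, hw.egen_smul hi, smul_zero]

variable [IsScalarTower (kk F) (Uq F N) M]

theorem kσ_smul {i : ℕ} (hi : i ≤ N) : kσ F N i • w = qq F ^ pairσ lam i • w := by
  rw [← prod_qq_zpow]
  exact list_prod_smul_eq fun j hj ↦
    hw.kgen_smul ⟨Nat.le_add_left 1 j, (List.mem_range.mp hj).trans_le hi⟩

theorem kσinv_smul {i : ℕ} (hi : i ≤ N) : kσinv F N i • w = qq F ^ (-pairσ lam i) • w := by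
  have hneg : -pairσ lam i = pairσ (-lam) i := (Finset.sum_neg_distrib _).symm
  rw [hneg, ← prod_qq_zpow]
  refine list_prod_smul_eq fun j hj ↦ ?_
  have hjN : 1 ≤ j + 1 ∧ j + 1 ≤ N := ⟨Nat.le_add_left 1 j, (List.mem_range.mp hj).trans_le hi⟩
  rw [Pi.neg_apply, zpow_neg]
  exact smul_eq_inv_smul_of_mul_eq_one (zpow_ne_zero _ (qq_ne_zero F))
    (kinvgen_mul_kgen F N hjN) (hw.kgen_smul hjN)

theorem hElt_smul {i : ℕ} (hi : i ≤ N) : hElt F N i • w = hval F lam i • w := by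
  have hK : Kσ F N i • w = vv F ^ pairσ lam i • w := by
    rw [Kσ, pow_smul_eq_of_smul_eq (hw.kσ_smul hi), qq_zpow_sq]
  have hKinv : KσInv F N i • w = vv F ^ (-pairσ lam i) • w := by
    rw [KσInv, pow_smul_eq_of_smul_eq (hw.kσinv_smul hi), qq_zpow_sq]
  rw [hElt, smul_assoc, mul_smul (KσInv F N i), sub_smul, smul_assoc, smul_assoc, hK, hKinv,
    smul_smul, smul_smul, ← sub_smul, smul_comm (KσInv F N i), hKinv, smul_smul, smul_smul]
  congr 1
  have hexp : vv F ^ (-(pairσ lam i + (i : ℤ) - 1)) =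
      vv F ^ (1 - (i : ℤ)) * vv F ^ (-pairσ lam i) := by
    rw [← zpow_add₀ (vv_ne_zero F)]
    congr 1
    ring
  rw [hval, qint, hexp, neg_add, zpow_add₀ (vv_ne_zero F), zpow_add₀ (vv_ne_zero F)]
  ring

theorem HI_smul (I : Finset ℕ) : HI F N I • w = HIval F N lam I • w := by
  have hr : ∀ i ∈ (rSet N I).sort (· ≤ ·), hElt F N i • w = hval F lam i • w := by
    intro i hi
    apply hw.hElt_smul
    simp only [Finset.mem_sort, rSet, Finset.mem_image, Finset.mem_sdiff, Finset.mem_Icc] at hi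
    omega
  rw [HI, list_prod_smul_eq hr, HIval, ← Multiset.prod_coe, ← Multiset.map_coe, Finset.sort_eq,
    Finset.prod_map_val]

theorem kgen_smul_fSet_smul {i : ℕ} (hi : 1 ≤ i ∧ i ≤ N) {S : Finset ℕ}
    (hS : ∀ s ∈ S, i + 1 < s) :
    kgen F N i • fSet F N S • w = qq F ^ lam i • fSet F N S • w := by
  have hcomm : Commute (kgen F N i) (fSet F N S) :=
    commute_fSet (fun j hj ↦ commute_kgen_fgen F N hj) hS
  rw [← mul_smul, hcomm.eq, mul_smul, hw.kgen_smul hi, smul_comm]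

theorem egen_smul_fSet_insert_add_smul {i s : ℕ} (hi : 1 ≤ i ∧ i ≤ N) {S : Finset ℕ}
    (hs : IsLeast (S : Set ℕ) s) (his : i + 1 < s) {c : kk F}
    (hc : c * (qq F * vv F ^ lam i) = -qint F (lam i + 1)) :
    egen F N i •
      (fSet F N (insert i (insert (i + 1) S)) • w + c • fSet F N (insert i S) • w) = 0 := by
  have hS : ∀ t ∈ S, i + 1 < t := fun t ht ↦ his.trans_le (hs.2 ht)
  have hleast : IsLeast (insert (i + 1) S : Finset ℕ) (i + 1) := by
    rw [Finset.coe_insert]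
    exact ⟨Set.mem_insert _ _, Set.forall_mem_insert.mpr ⟨le_rfl, fun t ht ↦ (hS t ht).le⟩⟩
  rw [fSet_insert F N hleast i.lt_succ_self, fij_self_succ, fSet_insert F N hs his,
    fSet_insert F N hs (i.lt_succ_self.trans his), mul_smul, mul_smul, mul_smul]
  exact egen_smul_add_smul_fij_smul hi his
    (hw.egen_smul_fSet_smul hi fun t ht ↦ i.lt_succ_self.trans (hS t ht))
    (hw.kgen_smul_fSet_smul hi hS) hc

end IsHighestWeightVector

theorem isHighestWeightVector_hw (lam : ℕ → ℤ) :
    IsHighestWeightVector F N lam (hw F N lam) where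
  egen_smul {j} hj := by
    rw [hw, ← Submodule.Quotient.mk_smul, Submodule.Quotient.mk_eq_zero, smul_eq_mul, mul_one]
    exact Submodule.subset_span (Or.inl ⟨j, hj.1, hj.2, rfl⟩)
  kgen_smul {j} hj := by
    rw [← algebraMap_smul (Uq F N) (qq F ^ lam j), hw, ← Submodule.Quotient.mk_smul,
      ← Submodule.Quotient.mk_smul, Submodule.Quotient.eq, smul_eq_mul, smul_eq_mul, mul_one,
      mul_one]
    exact Submodule.subset_span (Or.inr ⟨j, hj.1, hj.2, rfl⟩)

end HighestWeight

theorem HIval_erase (F : Type) [Field F] {N : ℕ} (lam : ℕ → ℤ) {I : Finset ℕ} {s : ℕ}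
    (hs : s ∈ I) (hsN : s ∈ Finset.Icc 1 (N + 1)) :
    HIval F N lam (I.erase s) = hval F lam (s - 1) * HIval F N lam I := by
  have hr : rSet N (I.erase s) = insert (s - 1) (rSet N I) := by
    rw [rSet, Finset.sdiff_erase hsN, Finset.image_insert, rSet]
  have hnot : s - 1 ∉ rSet N I := by
    simp only [rSet, Finset.mem_image, Finset.mem_sdiff, Finset.mem_Icc] at hsN ⊢
    rintro ⟨t, ⟨ht, htI⟩, hts⟩
    obtain rfl : t = s := by omega
    exact htI hs
  rw [HIval, hr, Finset.prod_insert hnot, HIval]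

theorem exists_isLeast_insert_one_eq {N : ℕ} (hN : 2 ≤ N) {I : Finset ℕ} (hI : I ∈ II N)
    (h2 : 2 ∈ I) :
    ∃ (S : Finset ℕ) (s : ℕ), IsLeast (S : Set ℕ) s ∧ 2 < s ∧
      insert 1 (insert 2 S) = I ∧ insert 1 S = I.erase 2 := by
  obtain ⟨hIsub, h1, hNI⟩ : I ⊆ Finset.Icc 1 (N + 1) ∧ 1 ∈ I ∧ N + 1 ∈ I := by
    simpa only [II, Finset.mem_filter, Finset.mem_powerset] using hI
  have hne : ((I.erase 2).erase 1).Nonempty :=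
    ⟨N + 1, Finset.mem_erase.mpr ⟨by omega, Finset.mem_erase.mpr ⟨by omega, hNI⟩⟩⟩
  have hinsert : insert 1 ((I.erase 2).erase 1) = I.erase 2 :=
    Finset.insert_erase (Finset.mem_erase.mpr ⟨by omega, h1⟩)
  have hleast := Finset.isLeast_min' _ hne
  refine ⟨_, _, hleast, ?_, by rw [Finset.insert_comm, hinsert, Finset.insert_erase h2], hinsert⟩
  obtain ⟨hs1, hs2, hsI⟩ :=
    (Finset.mem_erase.mp hleast.1).imp_right Finset.mem_erase.mp
  have := Finset.mem_Icc.mp (hIsub hsI)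
  omega

theorem stmt7_general {F : Type} [Field F] {N : ℕ} (hN : 2 ≤ N) {M : Type*} [AddCommGroup M]
    [Module (kk F) M] [Module (Uq F N) M] [IsScalarTower (kk F) (Uq F N) M] {lam : ℕ → ℤ} {w : M}
    (hw : IsHighestWeightVector F N lam w) {I : Finset ℕ} (hI : I ∈ II N)
    (h2 : 2 ∈ I) :
    egen F N 1 •
      (fSet F N I * HI F N I + fSet F N (I.erase 2) * HI F N (I.erase 2)) • w = 0 := by
  obtain ⟨S, s, hs, h2s, hI', hIerase⟩ := exists_isLeast_insert_one_eq hN hI h2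
  have hHI : HIval F N lam (I.erase 2) = hval F lam 1 * HIval F N lam I :=
    HIval_erase F lam h2 (Finset.mem_Icc.mpr ⟨one_le_two, by omega⟩)
  have hcoeff : hval F lam 1 * (qq F * vv F ^ lam 1) = -qint F (lam 1 + 1) := by
    simpa [pairσ] using hval_mul_qq_mul_vv_zpow F lam 1
  have hfactor : (fSet F N I * HI F N I + fSet F N (I.erase 2) * HI F N (I.erase 2)) • w =
      HIval F N lam I • (fSet F N I • w + hval F lam 1 • fSet F N (I.erase 2) • w) := by
    rw [add_smul, mul_smul, mul_smul, hw.HI_smul, hw.HI_smul, hHI, smul_comm (fSet F N I),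
      smul_comm (fSet F N (I.erase 2)), smul_add, smul_smul, mul_comm]
  have hkill := hw.egen_smul_fSet_insert_add_smul ⟨le_rfl, by omega⟩ hs h2s hcoeff
  rw [hI', hIerase] at hkill
  rw [hfactor, smul_comm, hkill, smul_zero]

/-- assume `N ≥ 2`. For `I ∈ S_1` and any weight `λ`,
`e_1 (f_I H_I + f_{I⁻} H_{I⁻}) v_λ = 0` in `M(λ)`, where `I⁻ = I \ {2}`. -/
theorem stmt7 (F : Type) [Field F] (N : ℕ) (hN : 2 ≤ N) (lam : ℕ → ℤ)
    (I : Finset ℕ) (hI : I ∈ II N) (h1 : (1 : ℕ) ∈ I) (h2 : (2 : ℕ) ∈ I) :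
    egen F N 1 •
      ((fSet F N I * HI F N I + fSet F N (I.erase 2) * HI F N (I.erase 2)) •
        hw F N lam) = 0 := by
  exact stmt7_general hN (isHighestWeightVector_hw lam) hI h2
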